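/- arXiv:1701.01835 — 9 statements merged into one kernel-verified Lean document; each statement's English description precedes it below -/
import Mathlib

section
/- Let α < 0 and let ψ̂ : [0,∞) → ℝ be a C² function such that ψ̂''(r) > 0 for all r > 0, lim_{r→∞} (ψ̂(r) − r)/r^α = 2^{(α+1)/2}, and lim_{r→∞} (ψ̂'(r) − 1)/r^{α−1} = α·2^{(α+1)/2}. Then lim_{r→∞} (ψ̂(r) − r·ψ̂'(r))/r^α = (1−α)·2^{(α+1)/2}, and moreover ψ̂(r) − r·ψ̂'(r) > 0 for every r ≥ 0. -/
open Real Filter Topology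

/-- The intercept at `0` of the tangent line at `r` to a `C²` function with `ψ'' > 0` on `(0,∞)`
is strictly decreasing in `r ≥ 0`. -/
theorem strictAntiOn_sub_mul_deriv {ψ : ℝ → ℝ} (hC2 : ContDiff ℝ 2 ψ)
    (hconv : ∀ r : ℝ, 0 < r → 0 < deriv (deriv ψ) r) :
    StrictAntiOn (fun r : ℝ => ψ r - r * deriv ψ r) (Set.Ici 0) := by
  have hψ : Differentiable ℝ ψ := hC2.differentiable (by norm_num)
  have hC1 : ContDiff ℝ 1 (deriv ψ) :=
    ((contDiff_succ_iff_deriv (n := 1)).1 (by simpa [one_add_one_eq_two] using hC2)).2.2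
  have hψ' : Differentiable ℝ (deriv ψ) := hC1.differentiable (by norm_num)
  refine strictAntiOn_of_deriv_neg (convex_Ici 0)
    (hψ.continuous.sub (continuous_id.mul hψ'.continuous)).continuousOn fun r hr => ?_
  rw [interior_Ici, Set.mem_Ioi] at hr
  have hd : HasDerivAt (fun r : ℝ => ψ r - r * deriv ψ r)
      (deriv ψ r - (1 * deriv ψ r + r * deriv (deriv ψ) r)) r :=
    (hψ r).hasDerivAt.sub ((hasDerivAt_id r).mul (hψ' r).hasDerivAt)
  rw [hd.deriv]
  linarith [mul_pos hr (hconv r hr)]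

/-- If `ψ̂` is `C²` on `[0,∞)` with `ψ̂'' > 0` on `(0,∞)` and the asymptotics
`(ψ̂(r) − r)/r^α → 2^((α+1)/2)` and `(ψ̂'(r) − 1)/r^(α−1) → α·2^((α+1)/2)` as `r → ∞`
(where `α < 0`), then `(ψ̂(r) − r·ψ̂'(r))/r^α → (1−α)·2^((α+1)/2)` and
`ψ̂(r) − r·ψ̂'(r) > 0` for every `r ≥ 0`. -/
theorem velazquez_positivity (α : ℝ) (hα : α < 0) (ψ : ℝ → ℝ)
    (hC2 : ContDiff ℝ 2 ψ)
    (hconv : ∀ r : ℝ, 0 < r → 0 < deriv (deriv ψ) r)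
    (hlim0 : Tendsto (fun r : ℝ => (ψ r - r) / r ^ α) atTop
      (𝓝 ((2 : ℝ) ^ ((α + 1) / 2))))
    (hlim1 : Tendsto (fun r : ℝ => (deriv ψ r - 1) / r ^ (α - 1)) atTop
      (𝓝 (α * (2 : ℝ) ^ ((α + 1) / 2)))) :
    Tendsto (fun r : ℝ => (ψ r - r * deriv ψ r) / r ^ α) atTop
      (𝓝 ((1 - α) * (2 : ℝ) ^ ((α + 1) / 2))) ∧
    ∀ r : ℝ, 0 ≤ r → 0 < ψ r - r * deriv ψ r := by
  have hlim : Tendsto (fun r : ℝ => (ψ r - r * deriv ψ r) / r ^ α) atTop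
      (𝓝 ((1 - α) * (2 : ℝ) ^ ((α + 1) / 2))) := by
    rw [one_sub_mul]
    refine (hlim0.sub hlim1).congr' ?_
    filter_upwards [eventually_gt_atTop 0] with r hr
    have hpow : r ^ α ≠ 0 := (rpow_pos_of_pos hr α).ne'
    rw [rpow_sub_one hr.ne']
    field_simp
    ring
  refine ⟨hlim, fun r hr => ?_⟩
  have hpos : 0 < (1 - α) * (2 : ℝ) ^ ((α + 1) / 2) :=
    mul_pos (by linarith) (rpow_pos_of_pos two_pos _)
  obtain ⟨s, hs, hrs⟩ := ((hlim.eventually_const_lt hpos).and (eventually_gt_atTop r)).exists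
  have hs0 : 0 < s := hr.trans_lt hrs
  have hpos_s : 0 < ψ s - s * deriv ψ s :=
    (div_pos_iff_of_pos_right (rpow_pos_of_pos hs0 α)).1 hs
  exact hpos_s.trans (strictAntiOn_sub_mul_deriv hC2 hconv hr hs0.le hrs)
end

section
/- Let n ≥ 4 be an integer and let α = α(n) := (−(2n−3)+√(4n²−20n+17))/2. Let r₀ > 0 and let ψ : [r₀,∞) → ℝ be smooth with 0 < ψ(r) < r for all r ≥ r₀, satisfying ψ''(r)/(1+ψ'(r)²) + 2(n−1)(r·ψ'(r)+ψ(r))/(r²−ψ(r)²) = 0 on (r₀,∞), together with lim_{r→∞} ψ(r)/r^α = 1 and lim_{r→∞} ψ'(r)/r^{α−1} = α. For k > 0 define ψ_k(r) := k^{1/(1−α)} ψ(k^{−1/(1−α)} r). Then for every integer m ≥ 0 there exists a constant C > 0 such that |∂_r^m ψ_k(r)| ≤ C·k·r^{α−m} for all k > 0 and all r ≥ k^{1/(1−α)} r₀. -/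
open Real Filter Topology
open Asymptotics
open scoped ContDiff

/-- `f` is smooth and its derivatives up to order `N` decay like those of a symbol of order `β`:
`f^(m)(r) = O(r^(β - m))` as `r → ∞`, for all `m ≤ N`. -/
structure IsSymbol (N : ℕ) (β : ℝ) (f : ℝ → ℝ) : Prop where
  contDiff : ContDiff ℝ ∞ f
  isBigO : ∀ m ≤ N, iteratedDeriv m f =O[atTop] fun r : ℝ => r ^ (β - m)

theorem ContDiff.deriv_of_infty {f : ℝ → ℝ} (hf : ContDiff ℝ ∞ f) : ContDiff ℝ ∞ (deriv f) :=
  (contDiff_infty_iff_deriv.mp hf).2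

theorem rpow_isBigO_rpow_atTop {β γ : ℝ} (h : β ≤ γ) :
    (fun r : ℝ => r ^ β) =O[atTop] fun r : ℝ => r ^ γ := by
  refine IsBigO.of_bound 1 ?_
  filter_upwards [eventually_ge_atTop 1] with r hr
  have hr0 : 0 ≤ r := by linarith
  rw [Real.norm_of_nonneg (Real.rpow_nonneg hr0 _), Real.norm_of_nonneg (Real.rpow_nonneg hr0 _),
    one_mul]
  exact Real.rpow_le_rpow_of_exponent_le hr h

theorem Asymptotics.IsBigO.mul_rpow_atTop {f g : ℝ → ℝ} {β γ δ : ℝ}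
    (hf : f =O[atTop] fun r : ℝ => r ^ β) (hg : g =O[atTop] fun r : ℝ => r ^ γ)
    (h : β + γ = δ) : (fun r => f r * g r) =O[atTop] fun r : ℝ => r ^ δ := by
  refine (hf.mul hg).congr' EventuallyEq.rfl ?_
  filter_upwards [eventually_gt_atTop 0] with r hr
  rw [← Real.rpow_add hr, h]

namespace IsSymbol

variable {N : ℕ} {β γ : ℝ} {f g : ℝ → ℝ}

theorem mono_left {M : ℕ} (hf : IsSymbol N β f) (h : M ≤ N) : IsSymbol M β f :=
  ⟨hf.contDiff, fun m hm => hf.isBigO m (hm.trans h)⟩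

theorem mono_right (hf : IsSymbol N β f) (h : β ≤ γ) : IsSymbol N γ f :=
  ⟨hf.contDiff, fun m hm => (hf.isBigO m hm).trans (rpow_isBigO_rpow_atTop (by linarith))⟩

theorem add (hf : IsSymbol N β f) (hg : IsSymbol N β g) : IsSymbol N β (f + g) := by
  refine ⟨hf.contDiff.add hg.contDiff, fun m hm => ?_⟩
  refine ((hf.isBigO m hm).add (hg.isBigO m hm)).congr_left fun r => ?_
  exact (iteratedDeriv_add (hf.contDiff.of_le (mod_cast le_top)).contDiffAt
    (hg.contDiff.of_le (mod_cast le_top)).contDiffAt).symm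

theorem isBigO_leibniz_term (hf : IsSymbol N β f) {m i : ℕ} (hi : i ≤ m) (hm : i ≤ N)
    (hg : iteratedDeriv (m - i) g =O[atTop] fun r : ℝ => r ^ (γ - (m - i : ℕ))) :
    (fun r => (m.choose i : ℝ) * iteratedDeriv i f r * iteratedDeriv (m - i) g r)
      =O[atTop] fun r : ℝ => r ^ (β + γ - m) := by
  refine ((hf.isBigO i hm).const_mul_left _).mul_rpow_atTop hg ?_
  rw [Nat.cast_sub hi]
  ring

theorem mul (hf : IsSymbol N β f) (hg : IsSymbol N γ g) : IsSymbol N (β + γ) (f * g) := by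
  refine ⟨hf.contDiff.mul hg.contDiff, fun m hm => ?_⟩
  have key : iteratedDeriv m (f * g) = fun r => ∑ i ∈ Finset.range (m + 1),
      m.choose i * iteratedDeriv i f r * iteratedDeriv (m - i) g r :=
    funext fun r => iteratedDeriv_mul (hf.contDiff.of_le (mod_cast le_top)).contDiffAt
      (hg.contDiff.of_le (mod_cast le_top)).contDiffAt
  rw [key]
  refine IsBigO.fun_sum fun i hi => ?_
  have him : i ≤ m := Nat.lt_succ_iff.mp (Finset.mem_range.mp hi)
  exact hf.isBigO_leibniz_term him (him.trans hm) (hg.isBigO _ ((Nat.sub_le _ _).trans hm))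

theorem const (N : ℕ) (c : ℝ) : IsSymbol N 0 fun _ => c := by
  refine ⟨contDiff_const, fun m _ => ?_⟩
  have key : iteratedDeriv m (fun _ : ℝ => c) = fun _ => if m = 0 then c else 0 :=
    funext fun r => iteratedDeriv_const
  rw [key]
  rcases m with _ | m
  · simpa using isBigO_const_const c (one_ne_zero (α := ℝ)) (atTop : Filter ℝ)
  · simpa using isBigO_zero _ _

theorem id (N : ℕ) : IsSymbol N 1 (id : ℝ → ℝ) := by
  refine ⟨contDiff_id, fun m _ => ?_⟩
  have key : iteratedDeriv m (_root_.id : ℝ → ℝ) =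
      fun r => if m = 0 then r else if m = 1 then 1 else 0 := funext fun r => iteratedDeriv_id
  rw [key]
  rcases m with _ | _ | m
  · simpa using isBigO_refl (fun r : ℝ => r) atTop
  · simpa using isBigO_refl (fun _ : ℝ => (1 : ℝ)) atTop
  · simpa using isBigO_zero _ _

theorem deriv (hf : IsSymbol (N + 1) β f) : IsSymbol N (β - 1) (deriv f) := by
  refine ⟨hf.contDiff.deriv_of_infty, fun m hm => ?_⟩
  have := hf.isBigO (m + 1) (Nat.succ_le_succ hm)
  rw [iteratedDeriv_succ'] at this
  convert this using 3
  push_cast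
  ring

theorem of_deriv (hf : ContDiff ℝ ∞ f) (h0 : f =O[atTop] fun r : ℝ => r ^ β)
    (h : IsSymbol N (β - 1) (_root_.deriv f)) : IsSymbol (N + 1) β f := by
  refine ⟨hf, fun m hm => ?_⟩
  rcases m with _ | m
  · simpa using h0
  · have := h.isBigO m (Nat.succ_le_succ_iff.mp hm)
    rw [iteratedDeriv_succ']
    convert this using 3
    push_cast
    ring

/-- If `f` is a symbol of exact order `β` and `f * g` is a symbol of order `β + γ` near infinity,
then the decay of `g` extends by one derivative. -/
theorem of_mul {h : ℝ → ℝ} (hf : IsSymbol N β f) (hf_ge : (fun r : ℝ => r ^ β) =O[atTop] f)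
    (hg : ContDiff ℝ ∞ g)
    (hg_lt : ∀ m < N, iteratedDeriv m g =O[atTop] fun r : ℝ => r ^ (γ - m))
    (hh : IsSymbol N (β + γ) h) (heq : f * g =ᶠ[atTop] h) : IsSymbol N γ g := by
  refine ⟨hg, fun m hm => ?_⟩
  rcases hm.lt_or_eq with hNm | rfl
  · exact hg_lt m hNm
  have hpos : ∀ᶠ r : ℝ in atTop, 0 < r ^ β := by
    filter_upwards [eventually_gt_atTop 0] with r hr using Real.rpow_pos_of_pos hr _
  have hinv : (fun r => (f r)⁻¹) =O[atTop] fun r : ℝ => r ^ (-β) := by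
    refine (hf_ge.inv_rev (hpos.mono fun r hr h0 => absurd h0 hr.ne')).congr' EventuallyEq.rfl ?_
    filter_upwards [eventually_gt_atTop 0] with r hr
    rw [Real.rpow_neg hr.le]
  have hne : ∀ᶠ r in atTop, f r ≠ 0 := by
    filter_upwards [hf_ge.eq_zero_imp, hpos] with r hr hr' h0 using hr'.ne' (hr h0)
  have hsum : (fun r => ∑ i ∈ Finset.range m, (m.choose (i + 1) : ℝ) *
      iteratedDeriv (i + 1) f r * iteratedDeriv (m - (i + 1)) g r)
      =O[atTop] fun r : ℝ => r ^ (β + γ - m) := by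
    refine IsBigO.fun_sum fun i hi => ?_
    have hi' : i + 1 ≤ m := Finset.mem_range.mp hi
    exact hf.isBigO_leibniz_term hi' hi' (hg_lt _ (by omega))
  obtain ⟨R, hR⟩ := eventually_atTop.mp heq
  refine (((hh.isBigO m le_rfl).sub hsum).mul_rpow_atTop hinv
    (show _ = γ - m by ring)).congr' ?_ EventuallyEq.rfl
  filter_upwards [hne, eventually_gt_atTop R] with r hr hRr
  have hr' : f * g =ᶠ[𝓝 r] h := by
    filter_upwards [Ioi_mem_nhds hRr] with x hx using hR x (le_of_lt hx)
  rw [← hr'.iteratedDeriv_eq m, iteratedDeriv_mul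
    (hf.contDiff.of_le (mod_cast le_top)).contDiffAt
    (hg.of_le (mod_cast le_top)).contDiffAt, Finset.sum_range_succ']
  simp only [Nat.choose_zero_right, Nat.cast_one, iteratedDeriv_zero, Nat.sub_zero, one_mul,
    add_sub_cancel_left]
  field_simp

end IsSymbol

theorem exists_rpow_bound_of_isBigO {f : ℝ → ℝ} {β r₀ : ℝ} (hf : Continuous f) (hr₀ : 0 < r₀)
    (h : f =O[atTop] fun r : ℝ => r ^ β) :
    ∃ C : ℝ, 0 < C ∧ ∀ r, r₀ ≤ r → |f r| ≤ C * r ^ β := by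
  obtain ⟨c, hc⟩ := h.bound
  obtain ⟨R, hR⟩ := eventually_atTop.mp hc
  have hcont : ContinuousOn (fun r => f r / r ^ β) (Set.Icc r₀ R) :=
    hf.continuousOn.div
      (continuousOn_id.rpow_const fun r hr => Or.inl (hr₀.trans_le hr.1).ne')
      fun r hr => (Real.rpow_pos_of_pos (hr₀.trans_le hr.1) _).ne'
  obtain ⟨D, hD⟩ := isCompact_Icc.exists_bound_of_continuousOn hcont
  refine ⟨max 1 (max c D), by positivity, fun r hr => ?_⟩
  have hpos : 0 < r ^ β := Real.rpow_pos_of_pos (hr₀.trans_le hr) _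
  rcases le_total R r with hRr | hRr
  · have := hR r hRr
    rw [Real.norm_eq_abs, Real.norm_of_nonneg hpos.le] at this
    refine this.trans (mul_le_mul_of_nonneg_right ?_ hpos.le)
    exact (le_max_left _ _).trans (le_max_right _ _)
  · have := hD r ⟨hr, hRr⟩
    rw [norm_div, Real.norm_eq_abs, Real.norm_of_nonneg hpos.le, div_le_iff₀ hpos] at this
    refine this.trans (mul_le_mul_of_nonneg_right ?_ hpos.le)
    exact (le_max_right _ _).trans (le_max_right _ _)

theorem isBigO_rpow_of_tendsto_div {f : ℝ → ℝ} {β l : ℝ}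
    (h : Tendsto (fun r : ℝ => f r / r ^ β) atTop (𝓝 l)) :
    f =O[atTop] fun r : ℝ => r ^ β := by
  refine isBigO_of_div_tendsto_nhds ?_ l h
  filter_upwards [eventually_gt_atTop 0] with r hr h0
  exact absurd h0 (Real.rpow_pos_of_pos hr _).ne'

/-- Solutions of the profile equation with symbol-type decay of order `α < 1` for `ψ` and `ψ'`
have symbol-type decay for all derivatives. -/
theorem isSymbol_of_profile_equation {ψ : ℝ → ℝ} {α c r₀ : ℝ} (hα : α < 1) (hr₀ : 0 < r₀)
    (hψ : ContDiff ℝ ∞ ψ) (hrange : ∀ r, r₀ ≤ r → 0 < ψ r ∧ ψ r < r)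
    (hODE : ∀ r, r₀ < r → deriv (deriv ψ) r / (1 + (deriv ψ r) ^ 2) +
      c * (r * deriv ψ r + ψ r) / (r ^ 2 - (ψ r) ^ 2) = 0)
    (h0 : ψ =O[atTop] fun r : ℝ => r ^ α)
    (h1 : deriv ψ =O[atTop] fun r : ℝ => r ^ (α - 1)) (N : ℕ) : IsSymbol (N + 1) α ψ := by
  set F : ℝ → ℝ := id * id + (fun _ => -1) * (ψ * ψ) with hF
  set H : ℝ → ℝ := (fun _ => -c) * ((fun _ => 1) + deriv ψ * deriv ψ) * (id * deriv ψ + ψ) with hH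
  have heq : F * deriv (deriv ψ) =ᶠ[atTop] H := by
    filter_upwards [eventually_gt_atTop r₀] with r hr
    obtain ⟨hpos, hlt⟩ := hrange r hr.le
    have hden : r ^ 2 - (ψ r) ^ 2 ≠ 0 := by nlinarith
    have hden' : 1 + (deriv ψ r) ^ 2 ≠ 0 := by positivity
    have := hODE r hr
    field_simp at this
    simp only [hF, hH, Pi.mul_apply, Pi.add_apply, id_eq]
    linarith
  have hF_ge : (fun r : ℝ => r ^ (2 : ℝ)) =O[atTop] F := by
    have hlittle : ψ =o[atTop] fun r : ℝ => r := by
      refine h0.trans_isLittleO ?_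
      refine isLittleO_of_tendsto' ((eventually_ne_atTop 0).mono fun r hr h => absurd h hr) ?_
      refine (tendsto_rpow_neg_atTop (sub_pos.mpr hα)).congr' ?_
      filter_upwards [eventually_gt_atTop 0] with r hr
      rw [neg_sub, Real.rpow_sub hr, Real.rpow_one]
    refine IsBigO.of_bound 2 ?_
    filter_upwards [hlittle.bound (show (0 : ℝ) < 1 / 2 by norm_num), eventually_gt_atTop r₀]
      with r hr hr'
    have hr0 : 0 < r := hr₀.trans hr'
    have hpos := (hrange r hr'.le).1
    rw [Real.norm_of_nonneg hpos.le, Real.norm_of_nonneg hr0.le] at hr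
    rw [Real.rpow_two, Real.norm_of_nonneg (sq_nonneg r)]
    refine le_trans ?_ (mul_le_mul_of_nonneg_left (Real.le_norm_self _) zero_le_two)
    simp only [hF, Pi.mul_apply, Pi.add_apply, id_eq]
    nlinarith
  have hFs : ∀ M, IsSymbol M α ψ → IsSymbol M 2 F := fun M hM =>
    (((IsSymbol.id M).mul (IsSymbol.id M)).mono_right (by norm_num)).add
      (((IsSymbol.const M (-1)).mul (hM.mul hM)).mono_right (by linarith))
  have hHs : ∀ M, IsSymbol (M + 1) α ψ → IsSymbol M α H := fun M hM =>
    (((IsSymbol.const M (-c)).mul ((IsSymbol.const M 1).add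
      ((hM.deriv.mul hM.deriv).mono_right (by linarith)))).mul
      ((((IsSymbol.id M).mul hM.deriv).mono_right (show _ ≤ α by linarith)).add
        (hM.mono_left M.le_succ))).mono_right (by linarith)
  have hbase : IsSymbol 1 α ψ := by
    refine IsSymbol.of_deriv hψ h0 ⟨hψ.deriv_of_infty, fun m hm => ?_⟩
    obtain rfl : m = 0 := by omega
    simpa using h1
  induction N with
  | zero => exact hbase
  | succ M hM =>
    have hM1 : IsSymbol M (α - 1) (deriv ψ) := hM.deriv
    refine IsSymbol.of_deriv hψ h0 (IsSymbol.of_deriv hψ.deriv_of_infty h1 ?_)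
    refine (hFs M (hM.mono_left M.le_succ)).of_mul hF_ge hψ.deriv_of_infty.deriv_of_infty
      (fun m hm => ?_) ((hHs M hM).mono_right (by linarith)) heq
    have := hM1.isBigO (m + 1) hm
    rw [iteratedDeriv_succ'] at this
    convert this using 3
    push_cast
    ring

/-- Decay estimates for all derivatives of the rescaled profile
`ψ_k(r) = k^(1/(1−α)) ψ(k^(−1/(1−α)) r)` of the projected minimal curve over the
projected Simons cone: `|∂_r^m ψ_k(r)| ≤ C k r^(α−m)` for `r ≥ k^(1/(1−α)) r₀`. -/
theorem decay_estimates_psi (n : ℕ) (hn : 4 ≤ n)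
    (α : ℝ)
    (hα : α = (-(2 * (n : ℝ) - 3) + Real.sqrt (4 * (n : ℝ) ^ 2 - 20 * (n : ℝ) + 17)) / 2)
    (r₀ : ℝ) (hr₀ : 0 < r₀) (ψ : ℝ → ℝ) (hψ : ContDiff ℝ (⊤ : ℕ∞) ψ)
    (hrange : ∀ r : ℝ, r₀ ≤ r → 0 < ψ r ∧ ψ r < r)
    (hODE : ∀ r : ℝ, r₀ < r →
      deriv (deriv ψ) r / (1 + (deriv ψ r) ^ 2) +
        2 * ((n : ℝ) - 1) * (r * deriv ψ r + ψ r) / (r ^ 2 - (ψ r) ^ 2) = 0)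
    (hlim0 : Tendsto (fun r : ℝ => ψ r / r ^ α) atTop (𝓝 1))
    (hlim1 : Tendsto (fun r : ℝ => deriv ψ r / r ^ (α - 1)) atTop (𝓝 α)) :
    ∀ m : ℕ, ∃ C : ℝ, 0 < C ∧ ∀ k : ℝ, 0 < k → ∀ r : ℝ, k ^ (1 / (1 - α)) * r₀ ≤ r →
      |iteratedDeriv m (fun x : ℝ => k ^ (1 / (1 - α)) * ψ (k ^ (-(1 / (1 - α))) * x)) r| ≤
        C * k * r ^ (α - (m : ℝ)) := by
  intro m
  have hα1 : α < 1 := by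
    have hn' : (4 : ℝ) ≤ n := by exact_mod_cast hn
    have : Real.sqrt (4 * (n : ℝ) ^ 2 - 20 * (n : ℝ) + 17) ≤ 2 * n - 3 :=
      Real.sqrt_le_iff.mpr ⟨by linarith, by nlinarith⟩
    linarith
  have hψm : ContDiff ℝ m ψ := hψ.of_le (mod_cast le_top)
  obtain ⟨C, hC, hbound⟩ := exists_rpow_bound_of_isBigO (hψm.continuous_iteratedDeriv m le_rfl) hr₀
    ((isSymbol_of_profile_equation hα1 hr₀ hψ hrange hODE (isBigO_rpow_of_tendsto_div hlim0)
      (isBigO_rpow_of_tendsto_div hlim1) m).isBigO m m.le_succ)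
  refine ⟨C, hC, fun k hk r hr => ?_⟩
  have hkl : (k ^ (1 / (1 - α))) ^ (1 - α) = k := by
    rw [← Real.rpow_mul hk.le, one_div_mul_cancel (by linarith), Real.rpow_one]
  rw [iteratedDeriv_const_mul_field, iteratedDeriv_comp_const_mul hψm, Real.rpow_neg hk.le]
  set l := k ^ (1 / (1 - α)) with hl
  have hl0 : 0 < l := Real.rpow_pos_of_pos hk _
  have hr0 : 0 < r := (mul_pos hl0 hr₀).trans_le hr
  have hb := hbound (l⁻¹ * r) (by rw [inv_mul_eq_div, le_div_iff₀ hl0]; linarith)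
  have hscale : l * (l⁻¹ ^ m * (l⁻¹ * r) ^ (α - m)) = k * r ^ (α - m) := by
    have hpow : l * (l⁻¹ ^ m * l⁻¹ ^ (α - m)) = k := by
      rw [← Real.rpow_natCast, ← Real.rpow_add (inv_pos.mpr hl0), add_sub_cancel,
        Real.inv_rpow hl0.le, ← div_eq_mul_inv, ← hkl, Real.rpow_sub hl0, Real.rpow_one]
    rw [Real.mul_rpow (inv_pos.mpr hl0).le hr0.le, ← hpow]
    ring
  calc |l * (l⁻¹ ^ m * iteratedDeriv m ψ (l⁻¹ * r))|
      = l * l⁻¹ ^ m * |iteratedDeriv m ψ (l⁻¹ * r)| := by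
        rw [← mul_assoc, abs_mul, abs_of_pos (by positivity)]
    _ ≤ l * l⁻¹ ^ m * (C * (l⁻¹ * r) ^ (α - m)) := by gcongr
    _ = C * (l * (l⁻¹ ^ m * (l⁻¹ * r) ^ (α - m))) := by ring
    _ = C * k * r ^ (α - m) := by rw [hscale, mul_assoc]
end

section
/- Let n ≥ 4 be an integer. For every smooth compactly supported function v on (0,∞): ∫₀^∞ (v(y)/y)² y^{2(n−1)} e^{−y²/4} dy ≤ (4/(2n−3)²) ∫₀^∞ v'(y)² y^{2(n−1)} e^{−y²/4} dy + (1/(2n−3)) ∫₀^∞ v(y)² y^{2(n−1)} e^{−y²/4} dy. -/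
open Real Filter Topology

/-- The derivative of `v² y^(2m+1) e^(-y²/4)`. -/
theorem hasDerivAt_sq_mul_pow_mul_gaussian (m : ℕ) {v : ℝ → ℝ} {v' y : ℝ}
    (hv : HasDerivAt v v' y) :
    HasDerivAt (fun y => v y ^ 2 * y ^ (2 * m + 1) * exp (-y ^ 2 / 4))
      ((2 * v y * v' * y ^ (2 * m + 1) + (2 * m + 1) * v y ^ 2 * y ^ (2 * m)
        - 1 / 2 * v y ^ 2 * y ^ (2 * m + 2)) * exp (-y ^ 2 / 4)) y := by
  have hexp : HasDerivAt (fun y : ℝ => exp (-y ^ 2 / 4)) (exp (-y ^ 2 / 4) * (-(2 * y) / 4)) y := by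
    simpa using (((hasDerivAt_id y).pow 2).neg.div_const 4).exp
  refine (((hv.pow 2).mul (hasDerivAt_pow (2 * m + 1) y)).mul hexp).congr_deriv ?_
  simp only [Pi.mul_apply, Pi.pow_apply]
  push_cast
  ring

/-- The pointwise inequality obtained by completing the square, up to the total derivative of
`v² y^k e^(-y²/4)` with `k = 2m + 1`. -/
theorem sq_mul_pow_le_of_completing_square (m : ℕ) (a b y : ℝ) :
    a ^ 2 * y ^ (2 * m) ≤
      4 / (2 * m + 1) ^ 2 * (b ^ 2 * y ^ (2 * m + 2)) +
        1 / (2 * m + 1) * (a ^ 2 * y ^ (2 * m + 2)) +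
        2 / (2 * m + 1) * (2 * a * b * y ^ (2 * m + 1) + (2 * m + 1) * a ^ 2 * y ^ (2 * m)
          - 1 / 2 * a ^ 2 * y ^ (2 * m + 2)) := by
  have hk : (2 * m + 1 : ℝ) ≠ 0 := by positivity
  rw [← sub_nonneg]
  have hsq : 0 ≤ ((a + 2 / (2 * m + 1) * (b * y)) * y ^ m) ^ 2 := sq_nonneg _
  convert hsq using 1
  field_simp
  ring

/-- Weighted Hardy-type inequality: for smooth compactly supported `v` on `(0,∞)`,
`‖v/y‖² ≤ (4/(2n−3)²) ‖v'‖² + (1/(2n−3)) ‖v‖²` with weight `y^(2(n−1)) e^(−y²/4)`. -/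
theorem weighted_hardy_inequality (n : ℕ) (hn : 4 ≤ n) (v : ℝ → ℝ)
    (hv : ContDiff ℝ (⊤ : ℕ∞) v) (hcpt : HasCompactSupport v)
    (hsupp : tsupport v ⊆ Set.Ioi 0) :
    (∫ y in Set.Ioi (0 : ℝ),
        (v y / y) ^ 2 * y ^ (2 * (n - 1)) * Real.exp (-y ^ 2 / 4)) ≤
      4 / (2 * (n : ℝ) - 3) ^ 2 *
        (∫ y in Set.Ioi (0 : ℝ),
          (deriv v y) ^ 2 * y ^ (2 * (n - 1)) * Real.exp (-y ^ 2 / 4)) +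
      1 / (2 * (n : ℝ) - 3) *
        (∫ y in Set.Ioi (0 : ℝ),
          (v y) ^ 2 * y ^ (2 * (n - 1)) * Real.exp (-y ^ 2 / 4)) := by
  obtain ⟨m, rfl⟩ : ∃ m, n = m + 2 := ⟨n - 2, by omega⟩
  have hk : 2 * ((m + 2 : ℕ) : ℝ) - 3 = 2 * m + 1 := by push_cast; ring
  have hexponent : 2 * (m + 2 - 1) = 2 * m + 2 := by omega
  rw [hk, hexponent]
  have hvc : Continuous v := hv.continuous
  have hv'c : Continuous (deriv v) := hv.continuous_deriv (by simp)
  have hzero : ∀ y ∉ tsupport v, v y = 0 := fun y => image_eq_zero_of_notMem_tsupport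
  have hzero' : ∀ y ∉ tsupport v, deriv v y = 0 := fun y hy =>
    image_eq_zero_of_notMem_tsupport fun h => hy (tsupport_deriv_subset h)
  have integrable_of_eq_zero {f : ℝ → ℝ} (hf : Continuous f) (h0 : ∀ y ∉ tsupport v, f y = 0) :
      MeasureTheory.IntegrableOn f (Set.Ioi 0) :=
    (hf.integrable_of_hasCompactSupport (HasCompactSupport.intro hcpt h0)).integrableOn
  set F : ℝ → ℝ := fun y => v y ^ 2 * y ^ (2 * m + 1) * exp (-y ^ 2 / 4) with hF
  have hderiv : deriv F = fun y =>
      (2 * v y * deriv v y * y ^ (2 * m + 1) + (2 * m + 1) * v y ^ 2 * y ^ (2 * m)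
        - 1 / 2 * v y ^ 2 * y ^ (2 * m + 2)) * exp (-y ^ 2 / 4) := by
    funext y
    exact (hasDerivAt_sq_mul_pow_mul_gaussian m
      (hv.differentiable (by simp) y).hasDerivAt).deriv
  have hFint : ∫ y in Set.Ioi (0 : ℝ), deriv F y = 0 := by
    have hv1 : ContDiff ℝ 1 v := hv.of_le (by exact_mod_cast le_top)
    have hFsmooth : ContDiff ℝ 1 F := by fun_prop
    have hFcpt : HasCompactSupport F :=
      HasCompactSupport.intro hcpt fun y hy => by simp [hF, hzero y hy]
    rw [hFcpt.integral_Ioi_deriv_eq hFsmooth]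
    simp [hF]
  have iA : MeasureTheory.IntegrableOn
      (fun y => v y ^ 2 * y ^ (2 * m) * exp (-y ^ 2 / 4)) (Set.Ioi 0) :=
    integrable_of_eq_zero (by fun_prop) fun y hy => by simp [hzero y hy]
  have iB : MeasureTheory.IntegrableOn
      (fun y => deriv v y ^ 2 * y ^ (2 * m + 2) * exp (-y ^ 2 / 4)) (Set.Ioi 0) :=
    integrable_of_eq_zero (by fun_prop) fun y hy => by simp [hzero' y hy]
  have iC : MeasureTheory.IntegrableOn
      (fun y => v y ^ 2 * y ^ (2 * m + 2) * exp (-y ^ 2 / 4)) (Set.Ioi 0) :=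
    integrable_of_eq_zero (by fun_prop) fun y hy => by simp [hzero y hy]
  have iD : MeasureTheory.IntegrableOn (deriv F) (Set.Ioi 0) :=
    integrable_of_eq_zero (by rw [hderiv]; fun_prop) fun y hy => by simp [hderiv, hzero y hy]
  have hA : (∫ y in Set.Ioi (0 : ℝ), (v y / y) ^ 2 * y ^ (2 * m + 2) * exp (-y ^ 2 / 4)) =
      ∫ y in Set.Ioi (0 : ℝ), v y ^ 2 * y ^ (2 * m) * exp (-y ^ 2 / 4) := by
    refine MeasureTheory.setIntegral_congr_fun measurableSet_Ioi fun y hy => ?_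
    have hy0 : y ≠ 0 := (Set.mem_Ioi.mp hy).ne'
    field_simp
    ring
  have iBC := (iB.const_mul (4 / (2 * m + 1 : ℝ) ^ 2)).add (iC.const_mul (1 / (2 * m + 1 : ℝ)))
  have iD' := iD.const_mul (2 / (2 * m + 1 : ℝ))
  calc _ = ∫ y in Set.Ioi (0 : ℝ), v y ^ 2 * y ^ (2 * m) * exp (-y ^ 2 / 4) := hA
    _ ≤ ∫ y in Set.Ioi (0 : ℝ),
        ((4 / (2 * m + 1 : ℝ) ^ 2 * (deriv v y ^ 2 * y ^ (2 * m + 2) * exp (-y ^ 2 / 4)) +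
          1 / (2 * m + 1 : ℝ) * (v y ^ 2 * y ^ (2 * m + 2) * exp (-y ^ 2 / 4))) +
          2 / (2 * m + 1 : ℝ) * deriv F y) := by
      refine MeasureTheory.integral_mono iA (iBC.add iD') fun y => ?_
      have hpt := mul_le_mul_of_nonneg_right
        (sq_mul_pow_le_of_completing_square m (v y) (deriv v y) y) (exp_pos (-y ^ 2 / 4)).le
      simp only [hderiv]
      exact hpt.trans_eq (by ring)
    _ = _ := by
      refine (MeasureTheory.integral_add iBC iD').trans ?_
      rw [MeasureTheory.integral_add' (iB.const_mul _) (iC.const_mul _)]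
      simp only [MeasureTheory.integral_const_mul, hFint, mul_zero, add_zero]
end

section
/- Let n ≥ 4 be an integer. For every smooth compactly supported function v on (0,∞): ∫₀^∞ v'(y)² y^{2(n−1)} e^{−y²/4} dy − 2(n−1) ∫₀^∞ (v(y)/y)² y^{2(n−1)} e^{−y²/4} dy − (1/2) ∫₀^∞ v(y)² y^{2(n−1)} e^{−y²/4} dy ≥ ((4n²−20n+17)/(2n−3)²) ∫₀^∞ v'(y)² y^{2(n−1)} e^{−y²/4} dy − ((6n−7)/(2(2n−3))) ∫₀^∞ v(y)² y^{2(n−1)} e^{−y²/4} dy. -/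
open Real Filter Topology

/-- Weighted Hardy inequality for the weight `y ^ (2 * (p + 1)) * exp (-y ^ 2 / 4)`. -/
theorem weighted_hardy (p : ℕ) {v : ℝ → ℝ} (hv : ContDiff ℝ 1 v) (hcpt : HasCompactSupport v) :
    (∫ y in Set.Ioi (0 : ℝ), (v y / y) ^ 2 * y ^ (2 * (p + 1)) * exp (-y ^ 2 / 4)) ≤
      4 / (2 * (p : ℝ) + 1) ^ 2 *
        (∫ y in Set.Ioi (0 : ℝ), (deriv v y) ^ 2 * y ^ (2 * (p + 1)) * exp (-y ^ 2 / 4)) +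
      1 / (2 * (p : ℝ) + 1) *
        (∫ y in Set.Ioi (0 : ℝ), (v y) ^ 2 * y ^ (2 * (p + 1)) * exp (-y ^ 2 / 4)) := by
  have hvc : Continuous v := hv.continuous
  have hdc : Continuous (deriv v) := hv.continuous_deriv le_rfl
  have hm : (0 : ℝ) < 2 * (p : ℝ) + 1 := by positivity
  let F : ℝ → ℝ := fun y => (v y) ^ 2 * (y ^ (2 * p + 1) * exp (-y ^ 2 / 4))
  have hF : ContDiff ℝ 1 F := by fun_prop
  have hFc : HasCompactSupport F :=
    hcpt.mono fun y hy h => hy (by simp [F, h])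
  have hF' (y : ℝ) : deriv F y = 2 * v y * deriv v y * y ^ (2 * p + 1) * exp (-y ^ 2 / 4) +
      (2 * p + 1) * ((v y) ^ 2 * y ^ (2 * p) * exp (-y ^ 2 / 4)) -
      1 / 2 * ((v y) ^ 2 * y ^ (2 * (p + 1)) * exp (-y ^ 2 / 4)) := by
    have h1 : HasDerivAt v (deriv v y) y := (hv.differentiable one_ne_zero y).hasDerivAt
    have h2 : HasDerivAt (fun y : ℝ => exp (-y ^ 2 / 4))
        (exp (-y ^ 2 / 4) * (-(2 * y) / 4)) y := by
      simpa using (((hasDerivAt_pow 2 y).neg).div_const 4).exp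
    have h3 := (h1.pow 2).mul ((hasDerivAt_pow (2 * p + 1) y).mul h2)
    refine h3.deriv.trans ?_
    simp only [Pi.mul_apply, Pi.pow_apply, Nat.add_sub_cancel]
    push_cast
    ring
  have hFint : ∫ y in Set.Ioi (0 : ℝ), deriv F y = 0 := by
    rw [hFc.integral_Ioi_deriv_eq hF]
    simp [F]
  have hB : (∫ y in Set.Ioi (0 : ℝ), (v y / y) ^ 2 * y ^ (2 * (p + 1)) * exp (-y ^ 2 / 4)) =
      ∫ y in Set.Ioi (0 : ℝ), (v y) ^ 2 * y ^ (2 * p) * exp (-y ^ 2 / 4) := by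
    refine MeasureTheory.setIntegral_congr_fun measurableSet_Ioi fun y hy => ?_
    have hy0 : y ≠ 0 := ne_of_gt hy
    simp only [mul_add, pow_add]
    field_simp
  have hia : MeasureTheory.IntegrableOn
      (fun y => (deriv v y) ^ 2 * y ^ (2 * (p + 1)) * exp (-y ^ 2 / 4)) (Set.Ioi 0) :=
    (Continuous.integrable_of_hasCompactSupport (by fun_prop)
      (hcpt.deriv.mono fun y hy h => hy (by simp [h]))).integrableOn
  have hiv (q : ℕ) : MeasureTheory.IntegrableOn
      (fun y => (v y) ^ 2 * y ^ q * exp (-y ^ 2 / 4)) (Set.Ioi 0) :=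
    (Continuous.integrable_of_hasCompactSupport (by fun_prop)
      (hcpt.mono fun y hy h => hy (by simp [h]))).integrableOn
  have hiF : MeasureTheory.IntegrableOn (deriv F) (Set.Ioi 0) :=
    ((hF.continuous_deriv le_rfl).integrable_of_hasCompactSupport hFc.deriv).integrableOn
  have key : 0 ≤ ∫ y in Set.Ioi (0 : ℝ),
      (4 / (2 * (p : ℝ) + 1) ^ 2 * ((deriv v y) ^ 2 * y ^ (2 * (p + 1)) * exp (-y ^ 2 / 4)) +
        1 / (2 * (p : ℝ) + 1) * ((v y) ^ 2 * y ^ (2 * (p + 1)) * exp (-y ^ 2 / 4)) -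
        (v y) ^ 2 * y ^ (2 * p) * exp (-y ^ 2 / 4) + 2 / (2 * (p : ℝ) + 1) * deriv F y) := by
    refine MeasureTheory.integral_nonneg fun y => ?_
    have hsq : 0 ≤ (2 / (2 * (p : ℝ) + 1) * deriv v y * y + v y) ^ 2 *
        ((y ^ p) ^ 2 * exp (-y ^ 2 / 4)) := by positivity
    refine hsq.trans_eq ?_
    simp only [hF']
    field_simp
    ring
  have hiac := (hia.const_mul (4 / (2 * (p : ℝ) + 1) ^ 2)).add
    ((hiv (2 * (p + 1))).const_mul (1 / (2 * (p : ℝ) + 1)))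
  rw [MeasureTheory.integral_add, MeasureTheory.integral_sub, MeasureTheory.integral_add] at key
  · simp only [MeasureTheory.integral_const_mul, hFint, mul_zero, add_zero] at key
    rw [hB]
    linarith
  exacts [hia.const_mul _, (hiv _).const_mul _, hiac, hiv _, hiac.sub (hiv _), hiF.const_mul _]

/-- Coercivity estimate for the linearized operator: for smooth compactly supported `v` on
`(0,∞)`, `‖v'‖² − 2(n−1)‖v/y‖² − (1/2)‖v‖² ≥ ((4n²−20n+17)/(2n−3)²)‖v'‖² −
((6n−7)/(2(2n−3)))‖v‖²` with weight `y^(2(n−1)) e^(−y²/4)`. -/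
theorem coercivity_estimate (n : ℕ) (hn : 4 ≤ n) (v : ℝ → ℝ)
    (hv : ContDiff ℝ (⊤ : ℕ∞) v) (hcpt : HasCompactSupport v)
    (hsupp : tsupport v ⊆ Set.Ioi 0) :
    (4 * (n : ℝ) ^ 2 - 20 * (n : ℝ) + 17) / (2 * (n : ℝ) - 3) ^ 2 *
        (∫ y in Set.Ioi (0 : ℝ),
          (deriv v y) ^ 2 * y ^ (2 * (n - 1)) * Real.exp (-y ^ 2 / 4)) -
      (6 * (n : ℝ) - 7) / (2 * (2 * (n : ℝ) - 3)) *
        (∫ y in Set.Ioi (0 : ℝ),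
          (v y) ^ 2 * y ^ (2 * (n - 1)) * Real.exp (-y ^ 2 / 4)) ≤
    (∫ y in Set.Ioi (0 : ℝ),
        (deriv v y) ^ 2 * y ^ (2 * (n - 1)) * Real.exp (-y ^ 2 / 4)) -
      2 * ((n : ℝ) - 1) *
        (∫ y in Set.Ioi (0 : ℝ),
          (v y / y) ^ 2 * y ^ (2 * (n - 1)) * Real.exp (-y ^ 2 / 4)) -
      1 / 2 *
        (∫ y in Set.Ioi (0 : ℝ),
          (v y) ^ 2 * y ^ (2 * (n - 1)) * Real.exp (-y ^ 2 / 4)) := by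
  obtain ⟨p, rfl⟩ : ∃ p, n = p + 2 := ⟨n - 2, by lia⟩
  have h := weighted_hardy p (hv.of_le (by exact_mod_cast le_top)) hcpt
  simp only [show p + 2 - 1 = p + 1 by lia]
  generalize (∫ y in Set.Ioi (0 : ℝ),
    (v y / y) ^ 2 * y ^ (2 * (p + 1)) * exp (-y ^ 2 / 4)) = B at *
  generalize (∫ y in Set.Ioi (0 : ℝ),
    (deriv v y) ^ 2 * y ^ (2 * (p + 1)) * exp (-y ^ 2 / 4)) = A at *
  generalize (∫ y in Set.Ioi (0 : ℝ),
    (v y) ^ 2 * y ^ (2 * (p + 1)) * exp (-y ^ 2 / 4)) = C at *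
  have hm : (2 * (p : ℝ) + 1) ≠ 0 := by positivity
  have h' := mul_le_mul_of_nonneg_left h (show (0 : ℝ) ≤ 2 * (p + 1) by positivity)
  push_cast
  rw [show 2 * ((p : ℝ) + 2) - 3 = 2 * p + 1 by ring,
    show (4 * ((p : ℝ) + 2) ^ 2 - 20 * (p + 2) + 17) / (2 * p + 1) ^ 2 =
      1 - 2 * (p + 1) * (4 / (2 * p + 1) ^ 2) by field_simp; ring,
    show (6 * ((p : ℝ) + 2) - 7) / (2 * (2 * p + 1)) =
      1 / 2 + 2 * (p + 1) * (1 / (2 * p + 1)) by field_simp; ring]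
  linarith
end

section
/- Let n ≥ 4 be an integer, let α = α(n) := (−(2n−3)+√(4n²−20n+17))/2, and set Υ₁ := −1/(4(n+α−1/2)), Υ₂ := 1/(16(n+α−1/2)(n+α+1/2)), and λ_i := −(1−α)/2 + i for i = 0,1,2. Define the operator L by (Lv)(y) := −(v''(y) + 2(n−1)(y v'(y) + v(y))/y² + (1/2)(−y v'(y) + v(y))). Then for all y > 0: the function φ₀(y) = y^α satisfies Lφ₀ = λ₀ φ₀; the function φ₁(y) = y^α(1 + Υ₁ y²) satisfies Lφ₁ = λ₁ φ₁; and the function φ₂(y) = y^α(1 + 2Υ₁ y² + Υ₂ y⁴) satisfies Lφ₂ = λ₂ φ₂. -/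
open Real Filter Topology

theorem hasDerivAt_rpow_mul {y p' : ℝ} (hy : 0 < y) (α : ℝ) {p : ℝ → ℝ} (hp : HasDerivAt p p' y) :
    HasDerivAt (fun x : ℝ => x ^ α * p x) (y ^ α * (α / y * p y + p')) y := by
  refine ((Real.hasDerivAt_rpow_const (Or.inl hy.ne')).mul hp).congr_deriv ?_
  rw [Real.rpow_sub_one hy.ne']
  ring

theorem hasDerivAt_rpow_mul_quartic {y : ℝ} (hy : 0 < y) (α a b c : ℝ) :
    HasDerivAt (fun x : ℝ => x ^ α * (a + b * x ^ 2 + c * x ^ 4))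
      (y ^ α * (α * a * y⁻¹ + (α + 2) * b * y + (α + 4) * c * y ^ 3)) y := by
  have hp : HasDerivAt (fun x : ℝ => a + b * x ^ 2 + c * x ^ 4)
      (b * (2 * y) + c * (4 * y ^ 3)) y := by
    refine ((((hasDerivAt_pow 2 y).const_mul b).const_add a).fun_add
      ((hasDerivAt_pow 4 y).const_mul c)).congr_deriv ?_
    norm_num
  refine (hasDerivAt_rpow_mul hy α hp).congr_deriv ?_
  field_simp
  ring

theorem deriv_deriv_rpow_mul_quartic {y : ℝ} (hy : 0 < y) (α a b c : ℝ) :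
    deriv (deriv fun x : ℝ => x ^ α * (a + b * x ^ 2 + c * x ^ 4)) y =
      y ^ α * (α * (α - 1) * a / y ^ 2 + (α + 2) * (α + 1) * b +
        (α + 4) * (α + 3) * c * y ^ 2) := by
  have hderiv : deriv (fun x : ℝ => x ^ α * (a + b * x ^ 2 + c * x ^ 4)) =ᶠ[𝓝 y]
      fun x => x ^ α * (α * a * x⁻¹ + (α + 2) * b * x + (α + 4) * c * x ^ 3) := by
    filter_upwards [lt_mem_nhds hy] with x hx
    exact (hasDerivAt_rpow_mul_quartic hx α a b c).deriv
  have hp : HasDerivAt (fun x : ℝ => α * a * x⁻¹ + (α + 2) * b * x + (α + 4) * c * x ^ 3)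
      (α * a * (-(y ^ 2)⁻¹) + (α + 2) * b + (α + 4) * c * (3 * y ^ 2)) y := by
    refine ((((hasDerivAt_inv hy.ne').const_mul (α * a)).fun_add
      ((hasDerivAt_id' y).const_mul ((α + 2) * b))).fun_add
      ((hasDerivAt_pow 3 y).const_mul ((α + 4) * c))).congr_deriv ?_
    norm_num
  rw [hderiv.deriv_eq, (hasDerivAt_rpow_mul hy α hp).deriv]
  field_simp
  ring

/-- The eigenvalue equation for `y ^ α * (1 + b y² + c y⁴)`, reduced to equations between
coefficients. -/
theorem linearized_operator_rpow_mul_quartic {y : ℝ} (hy : 0 < y) {m α b c μ : ℝ}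
    (hroot : α * (α - 1) + 2 * (m - 1) * (α + 1) = 0)
    (hconst : -(1 - α) / 2 - 4 * (m + α - 1 / 2) * b = μ)
    (hquad : (-(1 - α) / 2 + 1) * b - 8 * (m + α + 1 / 2) * c = μ * b)
    (hquart : (-(1 - α) / 2 + 2) * c = μ * c) {v : ℝ → ℝ}
    (hv : v = fun x : ℝ => x ^ α * (1 + b * x ^ 2 + c * x ^ 4)) :
    -(deriv (deriv v) y + 2 * (m - 1) * (y * deriv v y + v y) / y ^ 2 +
        (1 / 2) * (-(y * deriv v y) + v y)) = μ * v y := by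
  subst hv
  rw [deriv_deriv_rpow_mul_quartic hy, (hasDerivAt_rpow_mul_quartic hy α 1 b c).deriv]
  field_simp
  linear_combination (-2 - 2 * b * y ^ 2 - 2 * c * y ^ 4) * hroot + 2 * y ^ 2 * hconst +
    2 * y ^ 4 * hquad + 2 * y ^ 6 * hquart

/-- The first three eigenfunctions of the linearized operator
`L v = −(v'' + 2(n−1)(y v' + v)/y² + (1/2)(−y v' + v))`:
`φ_i` satisfies `L φ_i = λ_i φ_i` for `i = 0, 1, 2`, where
`λ_i = −(1−α)/2 + i`. -/
theorem eigenfunctions_linearized_operator (n : ℕ) (hn : 4 ≤ n)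
    (α : ℝ)
    (hα : α = (-(2 * (n : ℝ) - 3) + Real.sqrt (4 * (n : ℝ) ^ 2 - 20 * (n : ℝ) + 17)) / 2)
    (Υ₁ Υ₂ : ℝ)
    (hΥ₁ : Υ₁ = -1 / (4 * ((n : ℝ) + α - 1 / 2)))
    (hΥ₂ : Υ₂ = 1 / (16 * ((n : ℝ) + α - 1 / 2) * ((n : ℝ) + α + 1 / 2)))
    (lam : ℕ → ℝ) (hlam : ∀ i : ℕ, lam i = -(1 - α) / 2 + (i : ℝ))
    (L : (ℝ → ℝ) → ℝ → ℝ)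
    (hL : ∀ (v : ℝ → ℝ) (y : ℝ),
      L v y = -(deriv (deriv v) y + 2 * ((n : ℝ) - 1) * (y * deriv v y + v y) / y ^ 2 +
        (1 / 2) * (-(y * deriv v y) + v y))) :
    ∀ y : ℝ, 0 < y →
      L (fun y : ℝ => y ^ α) y = lam 0 * y ^ α ∧
      L (fun y : ℝ => y ^ α * (1 + Υ₁ * y ^ 2)) y =
        lam 1 * (y ^ α * (1 + Υ₁ * y ^ 2)) ∧
      L (fun y : ℝ => y ^ α * (1 + 2 * Υ₁ * y ^ 2 + Υ₂ * y ^ 4)) y =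
        lam 2 * (y ^ α * (1 + 2 * Υ₁ * y ^ 2 + Υ₂ * y ^ 4)) := by
  have hn' : (4 : ℝ) ≤ n := by exact_mod_cast hn
  have hdisc : 0 ≤ 4 * (n : ℝ) ^ 2 - 20 * (n : ℝ) + 17 := by nlinarith
  have hsq := Real.sq_sqrt hdisc
  have hsqrt := Real.sqrt_nonneg (4 * (n : ℝ) ^ 2 - 20 * (n : ℝ) + 17)
  set s := Real.sqrt (4 * (n : ℝ) ^ 2 - 20 * (n : ℝ) + 17)
  have hroot : α * (α - 1) + 2 * ((n : ℝ) - 1) * (α + 1) = 0 := by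
    rw [hα]
    linear_combination hsq / 4
  have hA : (n : ℝ) + α - 1 / 2 ≠ 0 := by
    apply ne_of_gt
    linarith
  have hB : (n : ℝ) + α + 1 / 2 ≠ 0 := by
    apply ne_of_gt
    linarith
  have hΥ₁' : 4 * ((n : ℝ) + α - 1 / 2) * Υ₁ = -1 := by
    rw [hΥ₁, mul_div_cancel₀ _ (mul_ne_zero four_ne_zero hA)]
  have hΥ₂' : 4 * ((n : ℝ) + α + 1 / 2) * Υ₂ = -Υ₁ := by
    rw [hΥ₁, hΥ₂]
    generalize (n : ℝ) + α - 1 / 2 = A at *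
    generalize (n : ℝ) + α + 1 / 2 = B at *
    field_simp
    norm_num
  intro y hy
  simp only [hL, hlam]
  refine ⟨?_, ?_, ?_⟩
  · refine linearized_operator_rpow_mul_quartic hy (b := 0) (c := 0) hroot ?_ ?_ ?_ ?_
    · simp
    · simp
    · simp
    · simp
  · refine linearized_operator_rpow_mul_quartic hy (b := Υ₁) (c := 0) hroot ?_ ?_ ?_ ?_
    · push_cast
      linear_combination -hΥ₁'
    · simp
    · simp
    · simp
  · refine linearized_operator_rpow_mul_quartic hy (b := 2 * Υ₁) (c := Υ₂) hroot ?_ ?_ ?_ rfl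
    · push_cast
      linear_combination -2 * hΥ₁'
    · push_cast
      linear_combination -2 * hΥ₂'
    · simp
end

section
/- Let n ≥ 4 be an integer. There is a constant C > 0 depending only on n such that for every continuously differentiable function v with compact support in (0,∞) and every y > 0: |v(y)| ≤ C·(y^{−(n−1/2)} + e^{(y+1)²/4})·(‖v'‖ + ‖v‖), where ‖f‖² = ∫₀^∞ f(z)² z^{2(n−1)} e^{−z²/4} dz. -/
open Real Filter Topology

/-- One-dimensional Sobolev inequality on a short interval, obtained by integrating the derivative
of `z ↦ (y + δ - z) * v z ^ 2`. -/
lemma mul_sq_le_intervalIntegral_sq_add_deriv_sq {v : ℝ → ℝ} (hv : ContDiff ℝ 1 v) {y δ : ℝ}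
    (hδ : 0 ≤ δ) (hδ1 : δ ≤ 1) :
    δ * v y ^ 2 ≤ ∫ z in y..(y + δ), (2 * v z ^ 2 + deriv v z ^ 2) := by
  have hc : Continuous v := hv.continuous
  have hc' : Continuous (deriv v) := hv.continuous_deriv le_rfl
  have hd : ∀ z, HasDerivAt (fun z => -((y + δ - z) * v z ^ 2))
      (v z ^ 2 - (y + δ - z) * (2 * v z * deriv v z)) z := fun z => by
    have h1 : HasDerivAt v (deriv v z) z := (hv.differentiable one_ne_zero z).hasDerivAt
    have h2 := (((hasDerivAt_id z).const_sub (y + δ)).mul (h1.pow 2)).neg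
    refine h2.congr_deriv ?_
    simp
    ring
  have hftc := intervalIntegral.integral_eq_sub_of_hasDerivAt (a := y) (b := y + δ)
    (fun z _ => hd z) (Continuous.intervalIntegrable (by fun_prop) _ _)
  have heq : δ * v y ^ 2 =
      ∫ z in y..(y + δ), (v z ^ 2 - (y + δ - z) * (2 * v z * deriv v z)) := by
    rw [hftc]
    ring
  rw [heq]
  refine intervalIntegral.integral_mono_on (by linarith)
    (Continuous.intervalIntegrable (by fun_prop) _ _)
    (Continuous.intervalIntegrable (by fun_prop) _ _) fun z hz => ?_
  obtain ⟨hz1, hz2⟩ := hz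
  have h0 : 0 ≤ y + δ - z := by linarith
  have h1 : y + δ - z ≤ 1 := by linarith
  nlinarith [mul_nonneg h0 (sq_nonneg (v z + deriv v z)),
    mul_nonneg (sub_nonneg.2 h1) (add_nonneg (sq_nonneg (v z)) (sq_nonneg (deriv v z)))]

/-- A Sobolev bound with respect to a weight `w` bounded below by `m` on `[y, y + δ]`. -/
lemma abs_le_mul_sqrt_weighted_integral {v w : ℝ → ℝ} (hv : ContDiff ℝ 1 v)
    (hs : HasCompactSupport v) (hw : Continuous w) (hw0 : ∀ z, 0 < z → 0 ≤ w z)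
    {y δ m K : ℝ} (hy : 0 < y) (hδ : 0 ≤ δ) (hδ1 : δ ≤ 1) (hm : 0 ≤ m)
    (hmw : ∀ z, y ≤ z → z ≤ y + δ → m ≤ w z) (hK : 0 ≤ K) (hKm : 1 ≤ 9 / 2 * K ^ 2 * (m * δ)) :
    |v y| ≤ 3 * K * (√(∫ z in Set.Ioi (0 : ℝ), deriv v z ^ 2 * w z) +
      √(∫ z in Set.Ioi (0 : ℝ), v z ^ 2 * w z)) := by
  have hc : Continuous v := hv.continuous
  have hc' : Continuous (deriv v) := hv.continuous_deriv le_rfl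
  have hiv : MeasureTheory.Integrable (fun z => v z ^ 2 * w z) := by
    refine Continuous.integrable_of_hasCompactSupport (by fun_prop) (hs.mono' ?_)
    intro z hz
    exact subset_tsupport _ fun h => hz (by simp [h])
  have hid : MeasureTheory.Integrable (fun z => deriv v z ^ 2 * w z) := by
    refine Continuous.integrable_of_hasCompactSupport (by fun_prop) (hs.deriv.mono' ?_)
    intro z hz
    exact subset_tsupport _ fun h => hz (by simp [h])
  set A := ∫ z in Set.Ioi (0 : ℝ), deriv v z ^ 2 * w z
  set B := ∫ z in Set.Ioi (0 : ℝ), v z ^ 2 * w z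
  have hA0 : 0 ≤ A := MeasureTheory.setIntegral_nonneg measurableSet_Ioi
    fun z hz => mul_nonneg (sq_nonneg _) (hw0 z hz)
  have hB0 : 0 ≤ B := MeasureTheory.setIntegral_nonneg measurableSet_Ioi
    fun z hz => mul_nonneg (sq_nonneg _) (hw0 z hz)
  have hloc : m * (δ * v y ^ 2) ≤ 2 * B + A := by
    calc m * (δ * v y ^ 2)
        ≤ m * ∫ z in y..(y + δ), (2 * v z ^ 2 + deriv v z ^ 2) :=
          mul_le_mul_of_nonneg_left (mul_sq_le_intervalIntegral_sq_add_deriv_sq hv hδ hδ1) hm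
      _ = ∫ z in y..(y + δ), m * (2 * v z ^ 2 + deriv v z ^ 2) := by
          rw [intervalIntegral.integral_const_mul]
      _ ≤ ∫ z in y..(y + δ), (2 * (v z ^ 2 * w z) + deriv v z ^ 2 * w z) := by
          refine intervalIntegral.integral_mono_on (by linarith)
            (Continuous.intervalIntegrable (by fun_prop) _ _)
            (Continuous.intervalIntegrable (by fun_prop) _ _) fun z hz => ?_
          have := mul_le_mul_of_nonneg_right (hmw z hz.1 hz.2)
            (by positivity : 0 ≤ 2 * v z ^ 2 + deriv v z ^ 2)
          linarith
      _ = ∫ z in Set.Ioc y (y + δ), (2 * (v z ^ 2 * w z) + deriv v z ^ 2 * w z) :=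
          intervalIntegral.integral_of_le (by linarith)
      _ ≤ ∫ z in Set.Ioi (0 : ℝ), (2 * (v z ^ 2 * w z) + deriv v z ^ 2 * w z) := by
          refine MeasureTheory.setIntegral_mono_set ((hiv.const_mul 2).add hid).integrableOn ?_
            (Filter.Eventually.of_forall fun z hz => hy.trans hz.1)
          refine MeasureTheory.ae_restrict_of_forall_mem measurableSet_Ioi fun z hz => ?_
          have := hw0 z hz
          simp only [Pi.zero_apply]
          positivity
      _ = 2 * B + A := by
          rw [MeasureTheory.integral_add (hiv.const_mul 2).integrableOn hid.integrableOn,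
            MeasureTheory.integral_const_mul]
  refine abs_le_of_sq_le_sq ?_ (by positivity)
  have hsum : A + B ≤ (√A + √B) ^ 2 := by
    nlinarith [Real.sq_sqrt hA0, Real.sq_sqrt hB0, mul_nonneg (sqrt_nonneg A) (sqrt_nonneg B)]
  calc v y ^ 2 = 1 * v y ^ 2 := (one_mul _).symm
    _ ≤ 9 / 2 * K ^ 2 * (m * δ) * v y ^ 2 := by gcongr
    _ = 9 / 2 * K ^ 2 * (m * (δ * v y ^ 2)) := by ring
    _ ≤ 9 / 2 * K ^ 2 * (2 * (√A + √B) ^ 2) :=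
        mul_le_mul_of_nonneg_left (by linarith) (by positivity)
    _ = (3 * K * (√A + √B)) ^ 2 := by ring

/-- Weighted Sobolev-type pointwise bound: there is `C = C(n) > 0` such that every `C¹`
compactly supported function `v` on `(0,∞)` satisfies, for all `y > 0`,
`|v(y)| ≤ C (y^(−(n−1/2)) + e^((y+1)²/4)) (‖v'‖ + ‖v‖)`, where
`‖f‖² = ∫₀^∞ f(z)² z^(2(n−1)) e^(−z²/4) dz`. -/
theorem weighted_sobolev_bound (n : ℕ) (hn : 4 ≤ n) :
    ∃ C : ℝ, 0 < C ∧ ∀ v : ℝ → ℝ, ContDiff ℝ 1 v → HasCompactSupport v →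
      tsupport v ⊆ Set.Ioi 0 → ∀ y : ℝ, 0 < y →
        |v y| ≤ C * (y ^ (-((n : ℝ) - 1 / 2)) + Real.exp ((y + 1) ^ 2 / 4)) *
          (Real.sqrt (∫ z in Set.Ioi (0 : ℝ),
              (deriv v z) ^ 2 * z ^ (2 * (n - 1)) * Real.exp (-z ^ 2 / 4)) +
           Real.sqrt (∫ z in Set.Ioi (0 : ℝ),
              (v z) ^ 2 * z ^ (2 * (n - 1)) * Real.exp (-z ^ 2 / 4))) := by
  refine ⟨3, by norm_num, fun v hv hs _ y hy => ?_⟩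
  simp only [mul_assoc _ (_ ^ (2 * (n - 1))) (rexp _)]
  have hw : Continuous fun z : ℝ => z ^ (2 * (n - 1)) * rexp (-z ^ 2 / 4) := by fun_prop
  have hw0 : ∀ z : ℝ, 0 < z → 0 ≤ z ^ (2 * (n - 1)) * rexp (-z ^ 2 / 4) :=
    fun z hz => by positivity
  set P := y ^ (-((n : ℝ) - 1 / 2)) with hP
  set E := rexp ((y + 1) ^ 2 / 4) with hE
  have hP0 : 0 < P := rpow_pos_of_pos hy _
  have hE0 : 0 < E := exp_pos _
  rcases le_total y 1 with hy1 | hy1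
  · refine abs_le_mul_sqrt_weighted_integral (m := y ^ (2 * (n - 1)) * rexp (-1)) hv hs hw hw0 hy
      hy.le hy1 (by positivity) (fun z hz1 hz2 => ?_) (by positivity) ?_
    · have hz0 : 0 < z := hy.trans_le hz1
      gcongr
      nlinarith
    · have hPy : P ^ 2 * (y ^ (2 * (n - 1)) * y) = 1 := by
        rw [← pow_succ, ← rpow_natCast, ← rpow_natCast, hP, ← rpow_mul hy.le, ← rpow_add hy]
        push_cast [Nat.cast_sub (by omega : 1 ≤ n)]
        ring_nf
        exact rpow_zero y
      have he : 1 ≤ 9 / 2 * rexp (-1) := by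
        rw [Real.exp_neg, ← div_eq_mul_inv, le_div_iff₀ (exp_pos 1)]
        linarith [exp_one_lt_d9]
      calc 1 ≤ 9 / 2 * rexp (-1) * (P ^ 2 * (y ^ (2 * (n - 1)) * y)) := by rwa [hPy, mul_one]
        _ = 9 / 2 * P ^ 2 * (y ^ (2 * (n - 1)) * rexp (-1) * y) := by ring
        _ ≤ _ := by
            gcongr
            linarith
  · refine abs_le_mul_sqrt_weighted_integral (m := rexp (-((y + 1) ^ 2 / 4))) hv hs hw hw0 hy
      zero_le_one le_rfl (by positivity) (fun z hz1 hz2 => ?_) (by positivity) ?_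
    · calc rexp (-((y + 1) ^ 2 / 4)) ≤ rexp (-z ^ 2 / 4) := by
            gcongr
            nlinarith
        _ ≤ _ := le_mul_of_one_le_left (exp_pos _).le (one_le_pow₀ (hy1.trans hz1))
    · have hE1 : 1 ≤ E := one_le_exp (by positivity)
      rw [Real.exp_neg, ← hE, mul_one]
      calc (1 : ℝ) ≤ 9 / 2 * E := by linarith
        _ = 9 / 2 * E ^ 2 * E⁻¹ := by field_simp
        _ ≤ _ := by
            gcongr
            linarith
end

section
/- Let λ₃ > 0 and let (λ_i)_{i∈ℕ} be real numbers with λ_i ≥ λ₃ for all i. Let s₀ < s̊ be reals, let (h_i)_{i∈ℕ} be a square-summable sequence, and let f_i : [s₀, s̊] → ℝ be continuous functions such that ξ ↦ Σ_i f_i(ξ)² is finite and continuous on [s₀, s̊]. Define v_i(s) := e^{−λ_i(s−s₀)} h_i + ∫_{s₀}^s e^{−λ_i(s−ξ)} f_i(ξ) dξ. Then for every δ ∈ (0,1) and every s ∈ [s₀, s̊]: Σ_i v_i(s)² ≤ e^{−2(1−δ)λ₃(s−s₀)} Σ_i h_i² + (1/(2δλ₃)) ∫_{s₀}^s e^{−2(1−δ)λ₃(s−ξ)}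 Σ_i f_i(ξ)² dξ. Moreover, if in addition Σ_i λ_i h_i² < ∞, then Σ_i λ_i v_i(s)² ≤ e^{−2(1−δ)λ₃(s−s₀)} Σ_i λ_i h_i² + (1/(2δ)) ∫_{s₀}^s e^{−2(1−δ)λ₃(s−ξ)} Σ_i f_i(ξ)² dξ. -/
open Real Filter Topology

/-- The Duhamel formula solves the scalar equation `u' = -a u + g`. -/
lemma hasDerivAt_duhamel (a c s₀ t : ℝ) {g : ℝ → ℝ} (hg : Continuous g) :
    HasDerivAt (fun t => exp (-a * (t - s₀)) * c + ∫ ξ in s₀..t, exp (-a * (t - ξ)) * g ξ)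
      (-a * (exp (-a * (t - s₀)) * c + ∫ ξ in s₀..t, exp (-a * (t - ξ)) * g ξ) + g t) t := by
  have factor : ∀ t : ℝ, exp (-a * (t - s₀)) * c + ∫ ξ in s₀..t, exp (-a * (t - ξ)) * g ξ =
      exp (-a * t) * (exp (a * s₀) * c + ∫ ξ in s₀..t, exp (a * ξ) * g ξ) := by
    intro t
    rw [mul_add, ← intervalIntegral.integral_const_mul, ← mul_assoc, ← exp_add]
    congr 1
    · ring_nf
    · refine intervalIntegral.integral_congr fun ξ _ => ?_
      rw [← mul_assoc, ← exp_add]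
      ring_nf
  have hint : HasDerivAt (fun t => ∫ ξ in s₀..t, exp (a * ξ) * g ξ) (exp (a * t) * g t) t := by
    have hcont : Continuous fun ξ => exp (a * ξ) * g ξ := by fun_prop
    exact hcont.integral_hasStrictDerivAt s₀ t |>.hasDerivAt
  have hexp : HasDerivAt (fun t : ℝ => exp (-a * t)) (exp (-a * t) * (-a * 1)) t :=
    ((hasDerivAt_id t).const_mul (-a)).exp
  have cancel : exp (-a * t) * exp (a * t) = 1 := by
    rw [← exp_add]
    simp
  simp only [factor]
  refine (hexp.mul (hint.const_add (exp (a * s₀) * c))).congr_deriv ?_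
  linear_combination g t * cancel

/-- A function with `u' ≥ -k u` that vanishes initially stays nonnegative. -/
lemma nonneg_of_neg_mul_le_deriv {u u' : ℝ → ℝ} {k s₀ s : ℝ} (hs : s₀ ≤ s)
    (hu : ∀ t, HasDerivAt u (u' t) t) (hle : ∀ t, -k * u t ≤ u' t) (h0 : u s₀ = 0) :
    0 ≤ u s := by
  have hderiv : ∀ t, HasDerivAt (fun t => exp (k * t) * u t)
      (exp (k * t) * (k * 1) * u t + exp (k * t) * u' t) t := fun t =>
    ((hasDerivAt_id t).const_mul k).exp.mul (hu t)
  have hmono : Monotone fun t => exp (k * t) * u t := by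
    refine monotone_of_hasDerivAt_nonneg hderiv fun t => ?_
    have := mul_nonneg (exp_pos (k * t)).le (sub_nonneg.2 (hle t))
    simp only [Pi.zero_apply]
    linarith
  have := hmono hs
  simp only [h0, mul_zero] at this
  exact nonneg_of_mul_nonneg_right this (exp_pos _)

/-- Weighted energy estimate for one coefficient. -/
lemma mul_sq_duhamel_le {a k m w C c s₀ s : ℝ} (hs : s₀ ≤ s) (hm : 0 < m) (hk : k + m ≤ 2 * a)
    (hw : 0 ≤ w) (hwC : w ≤ C * m) {g : ℝ → ℝ} (hg : ContinuousOn g (Set.Icc s₀ s)) :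
    w * (exp (-a * (s - s₀)) * c + ∫ ξ in s₀..s, exp (-a * (s - ξ)) * g ξ) ^ 2 ≤
      exp (-k * (s - s₀)) * (w * c ^ 2) + ∫ ξ in s₀..s, exp (-k * (s - ξ)) * (C * g ξ ^ 2) := by
  wlog hcont : Continuous g generalizing g
  · have hext : Continuous (Set.IccExtend hs ((Set.Icc s₀ s).domRestrict g)) :=
      hg.domRestrict.Icc_extend'
    have key := this hext.continuousOn hext
    have heq : ∀ ξ ∈ Set.uIcc s₀ s, Set.IccExtend hs ((Set.Icc s₀ s).domRestrict g) ξ = g ξ := by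
      intro ξ hξ
      rw [Set.uIcc_of_le hs] at hξ
      rw [Set.IccExtend_of_mem hs _ hξ, Set.domRestrict_apply]
    have hleft : ∫ ξ in s₀..s, exp (-a * (s - ξ)) *
          Set.IccExtend hs ((Set.Icc s₀ s).domRestrict g) ξ =
        ∫ ξ in s₀..s, exp (-a * (s - ξ)) * g ξ :=
      intervalIntegral.integral_congr fun ξ hξ => by simp only [heq ξ hξ]
    have hright : ∫ ξ in s₀..s, exp (-k * (s - ξ)) *
          (C * Set.IccExtend hs ((Set.Icc s₀ s).domRestrict g) ξ ^ 2) =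
        ∫ ξ in s₀..s, exp (-k * (s - ξ)) * (C * g ξ ^ 2) :=
      intervalIntegral.integral_congr fun ξ hξ => by simp only [heq ξ hξ]
    rwa [hleft, hright] at key
  have hcont' : Continuous fun ξ => C * g ξ ^ 2 := by fun_prop
  have hderiv := fun t => (hasDerivAt_duhamel k (w * c ^ 2) s₀ t hcont').sub
    (((hasDerivAt_duhamel a c s₀ t hcont).pow 2).const_mul w)
  have hnonneg := nonneg_of_neg_mul_le_deriv (k := k) hs hderiv (fun t => ?_) (by simp)
  · exact sub_nonneg.1 hnonneg
  simp only [Pi.sub_apply, Pi.pow_apply]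
  generalize exp (-a * (t - s₀)) * c + ∫ ξ in s₀..t, exp (-a * (t - ξ)) * g ξ = v
  generalize exp (-k * (t - s₀)) * (w * c ^ 2) +
    ∫ ξ in s₀..t, exp (-k * (t - ξ)) * (C * g ξ ^ 2) = R
  have young : 0 ≤ C * g t ^ 2 + m * w * v ^ 2 - 2 * w * v * g t := by
    refine nonneg_of_mul_nonneg_right (a := m) ?_ hm
    linarith [mul_nonneg (sub_nonneg.2 hwC) (sq_nonneg (g t)),
      mul_nonneg hw (sq_nonneg (g t - m * v))]
  have := mul_nonneg (sub_nonneg.2 hk) (mul_nonneg hw (sq_nonneg v))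
  norm_num
  linarith

/-- Weighted energy estimate for a sequence of coefficients. -/
lemma tsum_mul_sq_duhamel_le {ι : Type*} {a w c m : ι → ℝ} {k C s₀ s : ℝ} (hs : s₀ ≤ s)
    (hm : ∀ i, 0 < m i) (hk : ∀ i, k + m i ≤ 2 * a i)
    (hw : ∀ i, 0 ≤ w i) (hC : 0 ≤ C) (hwC : ∀ i, w i ≤ C * m i)
    (hc : Summable fun i => w i * c i ^ 2) {f : ι → ℝ → ℝ}
    (hf : ∀ i, ContinuousOn (f i) (Set.Icc s₀ s))
    (hfsum : ∀ ξ ∈ Set.Icc s₀ s, Summable fun i => f i ξ ^ 2)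
    (hF : ContinuousOn (fun ξ => ∑' i, f i ξ ^ 2) (Set.Icc s₀ s)) :
    ∑' i, w i * (exp (-a i * (s - s₀)) * c i +
        ∫ ξ in s₀..s, exp (-a i * (s - ξ)) * f i ξ) ^ 2 ≤
      exp (-k * (s - s₀)) * ∑' i, w i * c i ^ 2 +
        C * ∫ ξ in s₀..s, exp (-k * (s - ξ)) * ∑' i, f i ξ ^ 2 := by
  have hexp : Continuous fun ξ => exp (-k * (s - ξ)) := by fun_prop
  refine tsum_le_of_sum_le' ?_ fun S => ?_
  · refine add_nonneg (mul_nonneg (exp_pos _).le (tsum_nonneg fun i =>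
      mul_nonneg (hw i) (sq_nonneg _))) (mul_nonneg hC ?_)
    exact intervalIntegral.integral_nonneg hs fun ξ _ =>
      mul_nonneg (exp_pos _).le (tsum_nonneg fun i => sq_nonneg _)
  have hint : ∀ i, IntervalIntegrable (fun ξ => exp (-k * (s - ξ)) * (C * f i ξ ^ 2))
      MeasureTheory.volume s₀ s := fun i =>
    ContinuousOn.intervalIntegrable_of_Icc hs
      (hexp.continuousOn.mul (continuousOn_const.mul ((hf i).pow 2)))
  refine (Finset.sum_le_sum fun i _ =>
    mul_sq_duhamel_le hs (hm i) (hk i) (hw i) (hwC i) (hf i)).trans ?_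
  rw [Finset.sum_add_distrib, ← Finset.mul_sum]
  gcongr
  · exact hc.sum_le_tsum S fun i _ => mul_nonneg (hw i) (sq_nonneg _)
  rw [← intervalIntegral.integral_finsetSum fun i _ => hint i,
    ← intervalIntegral.integral_const_mul]
  refine intervalIntegral.integral_mono_on hs
    (ContinuousOn.intervalIntegrable_of_Icc hs ?_)
    (ContinuousOn.intervalIntegrable_of_Icc hs
      (continuousOn_const.mul (hexp.continuousOn.mul hF))) fun ξ hξ => ?_
  · exact continuousOn_finsetSum S fun i _ =>
      hexp.continuousOn.mul (continuousOn_const.mul ((hf i).pow 2))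
  · rw [← Finset.mul_sum, ← Finset.mul_sum, mul_left_comm]
    gcongr
    exact (hfsum ξ hξ).sum_le_tsum S fun i _ => sq_nonneg _

/-- Energy estimates for the eigenfunction coefficients
`v_i(s) = e^(−λ_i(s−s₀)) h_i + ∫_{s₀}^s e^(−λ_i(s−ξ)) f_i(ξ) dξ` of the Cauchy problem
`∂_s v + L v = f`, when all eigenvalues satisfy `λ_i ≥ λ₃ > 0`. -/
theorem energy_estimates (lam₃ : ℝ) (hlam₃ : 0 < lam₃)
    (lam : ℕ → ℝ) (hlam : ∀ i : ℕ, lam₃ ≤ lam i)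
    (s₀ s' : ℝ) (hs : s₀ < s')
    (h : ℕ → ℝ) (hh : Summable (fun i : ℕ => (h i) ^ 2))
    (f : ℕ → ℝ → ℝ) (hfc : ∀ i : ℕ, ContinuousOn (f i) (Set.Icc s₀ s'))
    (hfsum : ∀ ξ ∈ Set.Icc s₀ s', Summable (fun i : ℕ => (f i ξ) ^ 2))
    (hfF : ContinuousOn (fun ξ : ℝ => ∑' i : ℕ, (f i ξ) ^ 2) (Set.Icc s₀ s'))
    (v : ℕ → ℝ → ℝ)
    (hv : ∀ (i : ℕ) (s : ℝ), v i s =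
      Real.exp (-(lam i) * (s - s₀)) * h i +
        ∫ ξ in s₀..s, Real.exp (-(lam i) * (s - ξ)) * f i ξ) :
    ∀ δ : ℝ, 0 < δ → δ < 1 → ∀ s ∈ Set.Icc s₀ s',
      ((∑' i : ℕ, (v i s) ^ 2) ≤
        Real.exp (-2 * (1 - δ) * lam₃ * (s - s₀)) * (∑' i : ℕ, (h i) ^ 2) +
          (1 / (2 * δ * lam₃)) *
            ∫ ξ in s₀..s,
              Real.exp (-2 * (1 - δ) * lam₃ * (s - ξ)) * (∑' i : ℕ, (f i ξ) ^ 2)) ∧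
      (Summable (fun i : ℕ => lam i * (h i) ^ 2) →
        (∑' i : ℕ, lam i * (v i s) ^ 2) ≤
          Real.exp (-2 * (1 - δ) * lam₃ * (s - s₀)) * (∑' i : ℕ, lam i * (h i) ^ 2) +
            (1 / (2 * δ)) *
              ∫ ξ in s₀..s,
                Real.exp (-2 * (1 - δ) * lam₃ * (s - ξ)) * (∑' i : ℕ, (f i ξ) ^ 2)) := by
  intro δ hδ hδ1 s hmem
  have hsub : Set.Icc s₀ s ⊆ Set.Icc s₀ s' := Set.Icc_subset_Icc_right hmem.2
  have hpos : ∀ i, 0 < lam i := fun i => hlam₃.trans_le (hlam i)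
  have hrate : ∀ i, 2 * (1 - δ) * lam₃ + 2 * δ * lam i ≤ 2 * lam i := fun i => by
    linarith [mul_le_mul_of_nonneg_left (hlam i) (sub_nonneg.2 hδ1.le)]
  have hm : ∀ i, 0 < 2 * δ * lam i := fun i => by have := hpos i; positivity
  have hneg : -2 * (1 - δ) * lam₃ = -(2 * (1 - δ) * lam₃) := by ring
  have estimate : ∀ (w : ℕ → ℝ) (C : ℝ), (∀ i, 0 ≤ w i) → 0 ≤ C →
      (∀ i, w i ≤ C * (2 * δ * lam i)) → (Summable fun i => w i * h i ^ 2) → _ :=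
    fun w C hw hC hwC hsum => tsum_mul_sq_duhamel_le hmem.1 hm hrate hw hC hwC hsum
      (fun i => (hfc i).mono hsub) (fun ξ hξ => hfsum ξ (hsub hξ)) (hfF.mono hsub)
  simp only [hv, hneg]
  refine ⟨?_, fun hsum => estimate lam _ (fun i => (hpos i).le) (by positivity) (fun i => ?_) hsum⟩
  · simpa only [one_mul] using estimate (fun _ => 1) (1 / (2 * δ * lam₃)) (fun _ => zero_le_one)
      (by positivity) (fun i => by
        rw [div_mul_eq_mul_div, one_mul, one_le_div (by positivity)]
        gcongr
        exact hlam i) (by simpa only [one_mul] using hh)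
  · exact le_of_eq (by field_simp)
end

section
/- Let η : ℝ → ℝ be a smooth, non-increasing function with 0 ≤ η ≤ 1, η(r) = 1 for r ≤ 0, η(r) = 0 for r ≥ 1, and such that all derivatives of η vanish at r = 1. Then there exists a constant C > 0 such that η'(r)² ≤ C·η(r) for all r ∈ ℝ. -/
open Real Filter Topology

/-- The quadratic upper bound satisfied by a function with Lipschitz derivative. -/
lemma le_add_deriv_mul_add_sq_of_lipschitzWith_deriv {f : ℝ → ℝ} {K : NNReal}
    (hf : Differentiable ℝ f) (hK : LipschitzWith K (deriv f)) (x t : ℝ) :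
    f (x + t) ≤ f x + deriv f x * t + K / 2 * t ^ 2 := by
  set g : ℝ → ℝ := fun y => K / 2 * y ^ 2 - f y with hg
  have hd (y : ℝ) : HasDerivAt g (K * y - deriv f y) y := by
    refine (((hasDerivAt_pow 2 y).const_mul ((K : ℝ) / 2)).sub
      (hf y).hasDerivAt).congr_deriv ?_
    norm_num
    ring
  have hderiv : deriv g = fun y => K * y - deriv f y := funext fun y => (hd y).deriv
  have hmono : Monotone (deriv g) := by
    intro a b hab
    have h : deriv f b - deriv f a ≤ K * |b - a| :=
      (le_abs_self _).trans (hK.dist_le_mul b a)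
    rw [abs_of_nonneg (sub_nonneg.2 hab)] at h
    rw [hderiv]
    dsimp only
    linarith
  have hconv : ConvexOn ℝ Set.univ g :=
    hmono.convexOn_univ_of_deriv fun y => (hd y).differentiableAt
  have htan : g x + (K * x - deriv f x) * t ≤ g (x + t) := by
    rcases lt_trichotomy t 0 with ht | rfl | ht
    · have h := hconv.slope_le_of_hasDerivAt (Set.mem_univ (x + t)) (Set.mem_univ x)
        (by linarith) (hd x)
      rw [slope_def_field, div_le_iff₀ (by linarith)] at h
      linarith
    · simp
    · have h := hconv.le_slope_of_hasDerivAt (Set.mem_univ x) (Set.mem_univ (x + t))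
        (by linarith) (hd x)
      rw [slope_def_field, le_div_iff₀ (by linarith)] at h
      linarith
  simp only [hg] at htan
  linarith

/-- A nonnegative function with `K`-Lipschitz derivative satisfies `(f')² ≤ 2 K f`. -/
lemma deriv_sq_le_of_nonneg_of_lipschitzWith_deriv {f : ℝ → ℝ} {K : NNReal}
    (hf : Differentiable ℝ f) (hK : LipschitzWith K (deriv f)) (hnonneg : ∀ x, 0 ≤ f x)
    (x : ℝ) : (deriv f x) ^ 2 ≤ 2 * K * f x := by
  have h : discrim ((K : ℝ) / 2) (deriv f x) (f x) ≤ 0 := discrim_le_zero fun t => by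
    linarith [hnonneg (x + t), le_add_deriv_mul_add_sq_of_lipschitzWith_deriv hf hK x t]
  rw [discrim] at h
  linarith

/-- For a smooth, non-increasing cut-off `η` with `0 ≤ η ≤ 1`, `η = 1` on `(−∞,0]`,
`η = 0` on `[1,∞)`, vanishing to infinite order at `r = 1`, the quotient `(η')²/η`
is bounded: there is `C > 0` with `η'(r)² ≤ C η(r)` for all `r`. -/
theorem cutoff_quotient_bounded (η : ℝ → ℝ)
    (hsmooth : ContDiff ℝ (⊤ : ℕ∞) η)
    (hmono : Antitone η)
    (hrange : ∀ r : ℝ, 0 ≤ η r ∧ η r ≤ 1)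
    (h0 : ∀ r : ℝ, r ≤ 0 → η r = 1)
    (h1 : ∀ r : ℝ, 1 ≤ r → η r = 0)
    (hflat : ∀ m : ℕ, 1 ≤ m → iteratedDeriv m η 1 = 0) :
    ∃ C : ℝ, 0 < C ∧ ∀ r : ℝ, (deriv η r) ^ 2 ≤ C * η r := by
  have hsupp : HasCompactSupport (deriv η) := by
    refine HasCompactSupport.intro (isCompact_Icc (a := (0 : ℝ)) (b := 1)) fun r hr => ?_
    rw [Set.mem_Icc, not_and_or, not_le, not_le] at hr
    rcases hr with hr | hr
    · have h : η =ᶠ[𝓝 r] fun _ => 1 := by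
        filter_upwards [Iio_mem_nhds hr] with y hy using h0 y (le_of_lt hy)
      simpa using h.deriv_eq
    · have h : η =ᶠ[𝓝 r] fun _ => 0 := by
        filter_upwards [Ioi_mem_nhds hr] with y hy using h1 y (le_of_lt hy)
      simpa using h.deriv_eq
  have hsmooth' : ContDiff ℝ (⊤ : ℕ∞) (deriv η) := (contDiff_infty_iff_deriv.1 hsmooth).2
  obtain ⟨K, hK⟩ := hsmooth'.lipschitzWith_of_hasCompactSupport hsupp (by simp)
  refine ⟨2 * K + 1, by positivity, fun r => ?_⟩
  have h := deriv_sq_le_of_nonneg_of_lipschitzWith_deriv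
    (hsmooth.differentiable (by simp)) hK (fun x => (hrange x).1) r
  linarith [(hrange r).1]
end

section
/- Let n ≥ 2 be an integer, α < 1 and σ > 0. Let ψ̂ : (0,∞) → ℝ be a positive C² function satisfying ψ̂''(r)/(1+ψ̂'(r)²) + (n−1)(ψ̂'(r)/r − 1/ψ̂(r)) = 0 on (0,∞). Let I ⊂ (0,∞) be an interval and λ, μ : I → (0,∞) differentiable. Define W(z,τ) := λ(τ)^{1/(1−α)} ψ̂(z/(λ(τ)^{1/(1−α)} μ(τ))). Then W is positive, and for all τ ∈ I and z > 0, writing r := z/(λ(τ)^{1/(1−α)} μ(τ)): ∂_τ W − [∂²_z W/(1+(∂_z W)²) + (n−1)(∂_z W/z − 1/W) + ((1/2+σ)/(2στ))(−z ∂_z W + W)] = (−((1/2+σ)/(2στ)) λ(τ)^{1/(1−α)} + (λ(τ)^{α/(1−α)}/(1−α)) λ'(τ)) · (ψ̂(r) − r ψ̂'(r)) − (λ(τ)^{1/(1−α)}/μ(τ)) μ'(τ) · (r ψ̂'(r)) + ((μ(τ)²−1)/(λ(τ)^{1/(1−α)} μ(τ)²)) · [ψ̂''(r)/((1+ψ̂'(r)²)(1+(ψ̂'(r)/μ(τ))²))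 + (n−1) ψ̂'(r)/r]. -/
open Real Filter Topology Set

/-- Dilating a function by `L` in the values and by `L * m` in the variable divides its
derivative by `m`. -/
lemma deriv_mul_comp_div {f : ℝ → ℝ} (hf : Differentiable ℝ f) {L m : ℝ} (hL : L ≠ 0) :
    deriv (fun z => L * f (z / (L * m))) = fun z => deriv f (z / (L * m)) / m := by
  funext z
  have h : HasDerivAt (fun z => L * f (z / (L * m)))
      (L * (deriv f (z / (L * m)) * (1 / (L * m)))) z :=
    ((hf _).hasDerivAt.comp z ((hasDerivAt_id z).div_const (L * m))).const_mul L
  rw [h.deriv]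
  field_simp

/-- The derivative of a power `f ^ (1 / (1 - α))` of a positive function. -/
lemma hasDerivAt_rpow_one_div_one_sub {α : ℝ} (hα : α < 1) {f : ℝ → ℝ} {t : ℝ} (hpos : 0 < f t)
    (hf : DifferentiableAt ℝ f t) :
    HasDerivAt (fun s => f s ^ (1 / (1 - α))) (f t ^ (α / (1 - α)) / (1 - α) * deriv f t) t := by
  have hα' : 1 - α ≠ 0 := by linarith
  convert hf.hasDerivAt.rpow_const (p := 1 / (1 - α)) (Or.inl hpos.ne') using 1
  have hexp : 1 / (1 - α) - 1 = α / (1 - α) := by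
    field_simp
    ring
  rw [hexp]
  ring

/-- The derivative in the dilation parameters of `L * f (z / (L * m))`. -/
lemma hasDerivAt_mul_comp_div_param {f L m : ℝ → ℝ} (hf : Differentiable ℝ f) {L' m' t : ℝ}
    (hL : HasDerivAt L L' t) (hm : HasDerivAt m m' t) (hL0 : L t ≠ 0) (hm0 : m t ≠ 0)
    {z r : ℝ} (hr : r = z / (L t * m t)) :
    HasDerivAt (fun s => L s * f (z / (L s * m s)))
      (L' * (f r - r * deriv f r) - L t / m t * m' * (r * deriv f r)) t := by
  have hinner := (hasDerivAt_const t z).div (hL.mul hm) (mul_ne_zero hL0 hm0)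
  have hcomp : HasDerivAt (fun s => f (z / (L s * m s))) _ t :=
    (hf (z / (L t * m t))).hasDerivAt.comp t hinner
  refine (hL.mul hcomp).congr_deriv ?_
  rw [← hr]
  obtain rfl : z = r * (L t * m t) := by rw [hr]; field_simp
  simp only [Pi.mul_apply]
  field_simp
  ring

/-- The elliptic defect of the dilated profile, where `p`, `q`, `y` are the first derivative,
second derivative and value of the minimal profile at `r`. -/
lemma elliptic_defect {N L m p q y r : ℝ} (hL : 0 < L) (hm : 0 < m) (hr : 0 < r) (hy : 0 < y)
    (hODE : q / (1 + p ^ 2) + N * (p / r - 1 / y) = 0) :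
    q / (L * m) / m / (1 + (p / m) ^ 2) + N * (p / m / (r * (L * m)) - 1 / (L * y)) =
      -((m ^ 2 - 1) / (L * m ^ 2) * (q / ((1 + p ^ 2) * (1 + (p / m) ^ 2)) + N * p / r)) := by
  have hNy : N * (1 / (L * y)) = (q / (1 + p ^ 2) + N * (p / r)) / L := by
    field_simp at hODE ⊢
    linear_combination -hODE
  have h1 : 1 + p ^ 2 ≠ 0 := by positivity
  have h2 : m ^ 2 + p ^ 2 ≠ 0 := by positivity
  rw [mul_sub, hNy]
  field_simp
  ring

/-- The defect identity for the time-dependent perturbation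
`W(z,τ) = λ(τ)^(1/(1−α)) ψ̂(z/(λ(τ)^(1/(1−α)) μ(τ)))` of the minimal profile `ψ̂` as a
barrier for the type-II rescaled flow `∂_τ ŵ = ∂²_z ŵ/(1+(∂_z ŵ)²) + (n−1)(∂_z ŵ/z − 1/ŵ)
+ ((1/2+σ)/(2στ))(−z ∂_z ŵ + ŵ)`. -/
theorem barrier_defect_identity (n : ℕ) (hn : 2 ≤ n)
    (α : ℝ) (hα : α < 1) (σ : ℝ) (hσ : 0 < σ)
    (ψ : ℝ → ℝ) (hψpos : ∀ r : ℝ, 0 < r → 0 < ψ r)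
    (hψC2 : ContDiff ℝ 2 ψ)
    (hODE : ∀ r : ℝ, 0 < r →
      deriv (deriv ψ) r / (1 + (deriv ψ r) ^ 2) +
        ((n : ℝ) - 1) * (deriv ψ r / r - 1 / ψ r) = 0)
    (I : Set ℝ) (hI : I ⊆ Set.Ioi 0)
    (lam mu : ℝ → ℝ)
    (hlam : ∀ τ ∈ I, 0 < lam τ) (hmu : ∀ τ ∈ I, 0 < mu τ)
    (hlamdiff : ∀ τ ∈ I, DifferentiableAt ℝ lam τ)
    (hmudiff : ∀ τ ∈ I, DifferentiableAt ℝ mu τ)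
    (W : ℝ → ℝ → ℝ)
    (hW : ∀ z τ : ℝ, W z τ = (lam τ) ^ (1 / (1 - α)) *
      ψ (z / ((lam τ) ^ (1 / (1 - α)) * mu τ))) :
    ∀ τ ∈ I, ∀ z : ℝ, 0 < z →
      ∀ r : ℝ, r = z / ((lam τ) ^ (1 / (1 - α)) * mu τ) →
        0 < W z τ ∧
        deriv (fun τ' : ℝ => W z τ') τ -
            (deriv (deriv (fun z' : ℝ => W z' τ)) z /
                (1 + (deriv (fun z' : ℝ => W z' τ) z) ^ 2) +
              ((n : ℝ) - 1) * (deriv (fun z' : ℝ => W z' τ) z / z - 1 / W z τ) +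
              ((1 / 2 + σ) / (2 * σ * τ)) *
                (-(z * deriv (fun z' : ℝ => W z' τ) z) + W z τ)) =
          (-((1 / 2 + σ) / (2 * σ * τ)) * (lam τ) ^ (1 / (1 - α)) +
              ((lam τ) ^ (α / (1 - α)) / (1 - α)) * deriv lam τ) *
            (ψ r - r * deriv ψ r) -
          ((lam τ) ^ (1 / (1 - α)) / mu τ) * deriv mu τ * (r * deriv ψ r) +
          ((mu τ) ^ 2 - 1) / ((lam τ) ^ (1 / (1 - α)) * (mu τ) ^ 2) *
            (deriv (deriv ψ) r /
                ((1 + (deriv ψ r) ^ 2) * (1 + (deriv ψ r / mu τ) ^ 2)) +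
              ((n : ℝ) - 1) * deriv ψ r / r) := by
  intro τ hτ z hz r hr
  have hl : 0 < lam τ := hlam τ hτ
  have hm : 0 < mu τ := hmu τ hτ
  have hψ : Differentiable ℝ ψ := hψC2.differentiable two_ne_zero
  have hψ' : Differentiable ℝ (deriv ψ) :=
    (hψC2.iterate_deriv' 1 1).differentiable one_ne_zero
  have hL : 0 < lam τ ^ (1 / (1 - α)) := Real.rpow_pos_of_pos hl _
  have htime := (hasDerivAt_mul_comp_div_param hψ
    (hasDerivAt_rpow_one_div_one_sub hα hl (hlamdiff τ hτ)) (hmudiff τ hτ).hasDerivAt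
    hL.ne' hm.ne' hr).deriv
  simp only [hW]
  rw [htime, deriv_mul_comp_div hψ hL.ne']
  set L := lam τ ^ (1 / (1 - α))
  have hr0 : 0 < r := by rw [hr]; positivity
  have hsnd : deriv (fun z => deriv ψ (z / (L * mu τ)) / mu τ) z =
      deriv (deriv ψ) r / (L * mu τ) / mu τ := by
    have h : HasDerivAt (fun z => deriv ψ (z / (L * mu τ)) / mu τ)
        (deriv (deriv ψ) (z / (L * mu τ)) * (1 / (L * mu τ)) / mu τ) z :=
      ((hψ' _).hasDerivAt.comp z ((hasDerivAt_id z).div_const (L * mu τ))).div_const (mu τ)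
    rw [h.deriv, ← hr, mul_one_div]
  rw [hsnd]
  simp only [← hr]
  have hz' : z = r * (L * mu τ) := by rw [hr]; field_simp
  refine ⟨mul_pos hL (hψpos r hr0), ?_⟩
  have hell := elliptic_defect hL hm hr0 (hψpos r hr0) (hODE r hr0)
  have htransport : -(z * (deriv ψ r / mu τ)) + L * ψ r = L * (ψ r - r * deriv ψ r) := by
    rw [hz']
    field_simp
    ring
  rw [htransport, hz', hell]
  ring
end
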